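/- For t ∈ [0,1] and δ ≥ 0, define f_{t,δ}: ℝ → ℝ by f_{t,δ}(x) = 0 for x ≤ tδ and f_{t,δ}(x) = sqrt(1 − tδ/x) for x > tδ. If L is a positive semidefinite matrix and Q is the projection onto its range, then ‖f_{t,δ}(L) − Q‖ ≤ 1 − sqrt(1 − t) whenever every nonzero eigenvalue of L is ≥ δ. -/

import Mathlib

open Matrix ComplexOrder

/-!
The functions `f_{t,δ}` and `θ` both vanish at `0`. A nonzero spectral value `x` satisfies
`x ≥ δ ≥ tδ`, and there `θ x - f_{t,δ} x = 1 - √(1 - tδ / x) ≤ 1 - √(1 - t)`. Since the functional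
calculus is isometric, this pointwise bound on the spectrum is the norm bound.
-/

/-- The function `f_{t,δ}` of the paper, which depends on `t` and `δ` only through the threshold
`s = tδ`. -/
noncomputable def sqrtCutoff (s x : ℝ) : ℝ := if x ≤ s then 0 else √(1 - s / x)

/-- The Heaviside function `θ`, with `θ 0 = 0`, so that `θ(a)` is the projection onto the range
of a positive operator `a`, provided that range is closed; this is the case exactly when `θ` is
continuous on the spectrum of `a`. -/
noncomputable def unitStep (x : ℝ) : ℝ := if x ≤ 0 then 0 else 1

theorem sqrtCutoff_of_le {s x : ℝ} (hx : x ≤ s) : sqrtCutoff s x = 0 :=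
  if_pos hx

theorem sqrtCutoff_of_ge {s x : ℝ} (hx : 0 < x) (hsx : s ≤ x) : sqrtCutoff s x = √(1 - s / x) := by
  rcases hsx.eq_or_lt with rfl | hsx
  · rw [sqrtCutoff_of_le le_rfl, div_self hx.ne', sub_self, Real.sqrt_zero]
  · exact if_neg hsx.not_ge

theorem unitStep_of_nonpos {x : ℝ} (hx : x ≤ 0) : unitStep x = 0 :=
  if_pos hx

theorem unitStep_of_pos {x : ℝ} (hx : 0 < x) : unitStep x = 1 :=
  if_neg hx.not_ge

theorem sqrtCutoff_zero : sqrtCutoff 0 = unitStep := by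
  funext x
  simp only [sqrtCutoff, unitStep, zero_div, sub_zero, Real.sqrt_one]

theorem continuous_sqrtCutoff {s : ℝ} (hs : 0 < s) : Continuous (sqrtCutoff s) := by
  have sqrtCutoff_eq : sqrtCutoff s = fun x ↦ √(1 - s / max x s) := by
    funext x
    rcases le_total x s with hxs | hsx
    · rw [sqrtCutoff_of_le hxs, max_eq_right hxs, div_self hs.ne', sub_self, Real.sqrt_zero]
    · rw [sqrtCutoff_of_ge (hs.trans_le hsx) hsx, max_eq_left hsx]
  have max_ne_zero (x : ℝ) : max x s ≠ 0 := (hs.trans_le (le_max_right x s)).ne'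
  rw [sqrtCutoff_eq]
  fun_prop (disch := exact max_ne_zero _)

theorem continuousOn_sqrtCutoff {s : ℝ} {S : Set ℝ} (hs : 0 ≤ s) (hθ : ContinuousOn unitStep S) :
    ContinuousOn (sqrtCutoff s) S := by
  rcases hs.eq_or_lt with rfl | hs
  · rwa [sqrtCutoff_zero]
  · exact (continuous_sqrtCutoff hs).continuousOn

theorem abs_sqrt_one_sub_sub_one_le {t u : ℝ} (hu : 0 ≤ u) (hut : u ≤ t) :
    |√(1 - u) - 1| ≤ 1 - √(1 - t) := by
  have sqrt_le_one : √(1 - u) ≤ 1 := Real.sqrt_le_one.mpr (by linarith)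
  rw [abs_sub_comm, abs_of_nonneg (sub_nonneg.mpr sqrt_le_one)]
  gcongr

theorem abs_sqrtCutoff_sub_unitStep_le {t δ x : ℝ} (ht0 : 0 ≤ t) (ht1 : t ≤ 1) (hδ : 0 ≤ δ)
    (hx : x ≠ 0 → δ ≤ x) : |sqrtCutoff (t * δ) x - unitStep x| ≤ 1 - √(1 - t) := by
  rcases eq_or_ne x 0 with rfl | hx_ne
  · rw [sqrtCutoff_of_le (mul_nonneg ht0 hδ), unitStep_of_nonpos le_rfl, sub_self, abs_zero,
      sub_nonneg, Real.sqrt_le_one]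
    linarith
  · have hδx : δ ≤ x := hx hx_ne
    have hx_pos : 0 < x := (hδ.trans hδx).lt_of_ne' hx_ne
    have threshold_le : t * δ ≤ x := (mul_le_of_le_one_left hδ ht1).trans hδx
    have ratio_le : t * δ / x ≤ t := by
      rw [div_le_iff₀ hx_pos]
      gcongr
    rw [sqrtCutoff_of_ge hx_pos threshold_le, unitStep_of_pos hx_pos]
    exact abs_sqrt_one_sub_sub_one_le (by positivity) ratio_le

theorem norm_cfc_sub_cfc_le_iff {𝕜 A : Type*} {p : A → Prop} [RCLike 𝕜] [NormedRing A] [StarRing A]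
    [NormedAlgebra 𝕜 A] [IsometricContinuousFunctionalCalculus 𝕜 A p] {f g : 𝕜 → 𝕜} {a : A} {c : ℝ}
    (hc : 0 ≤ c) (hf : ContinuousOn f (spectrum 𝕜 a)) (hg : ContinuousOn g (spectrum 𝕜 a))
    (ha : p a) : ‖cfc f a - cfc g a‖ ≤ c ↔ ∀ x ∈ spectrum 𝕜 a, ‖f x - g x‖ ≤ c := by
  rw [← cfc_sub f g a hf hg]
  exact norm_cfc_le_iff (fun x ↦ f x - g x) a hc (hf.sub hg) ha

theorem stmt_9_general {A : Type*} [NormedRing A] [StarRing A] [NormedAlgebra ℝ A]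
    [IsometricContinuousFunctionalCalculus ℝ A IsSelfAdjoint] {t δ : ℝ} (ht0 : 0 ≤ t)
    (ht1 : t ≤ 1) (hδ : 0 ≤ δ) {a : A} (ha : IsSelfAdjoint a)
    (hev : ∀ x ∈ spectrum ℝ a, x ≠ 0 → δ ≤ x) (hθ : ContinuousOn unitStep (spectrum ℝ a)) :
    ‖cfc (sqrtCutoff (t * δ)) a - cfc unitStep a‖ ≤ 1 - √(1 - t) := by
  have bound_nonneg : 0 ≤ 1 - √(1 - t) := sub_nonneg.mpr (Real.sqrt_le_one.mpr (by linarith))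
  rw [norm_cfc_sub_cfc_le_iff bound_nonneg (continuousOn_sqrtCutoff (mul_nonneg ht0 hδ) hθ) hθ ha]
  exact fun x hx ↦ abs_sqrtCutoff_sub_unitStep_le ht0 ht1 hδ (hev x hx)

/-- For `f_{t,δ}(x) = 0` if `x ≤ tδ` and `sqrt(1 − tδ/x)` otherwise, and `L`
positive semidefinite with every nonzero eigenvalue `≥ δ`, one has
`‖f_{t,δ}(L) − Q‖ ≤ 1 − sqrt(1 − t)`, where `Q = θ(L)` is the projection onto the range of `L`
(Heaviside functional calculus). -/
theorem stmt_9 (D : ℕ) (t δ : ℝ) (ht0 : 0 ≤ t) (ht1 : t ≤ 1) (hδ : 0 ≤ δ)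
    (L : Matrix (Fin D) (Fin D) ℂ) (hL : L.PosSemidef)
    (hev : ∀ i, hL.1.eigenvalues i ≠ 0 → δ ≤ hL.1.eigenvalues i) :
    ‖Matrix.toEuclideanCLM (𝕜 := ℂ)
        (hL.1.cfc (fun x => if x ≤ t * δ then 0 else Real.sqrt (1 - t * δ / x))
          - hL.1.cfc (fun x => if x ≤ 0 then 0 else 1))‖
      ≤ 1 - Real.sqrt (1 - t) := by
  open scoped Matrix.Norms.L2Operator in
  rw [l2_opNorm_toEuclideanCLM, ← hL.1.cfc_eq, ← hL.1.cfc_eq]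
  exact stmt_9_general ht0 ht1 hδ hL.1.isSelfAdjoint
    (by rwa [hL.1.spectrum_real_eq_range_eigenvalues, Set.forall_mem_range])
    (L.finite_real_spectrum.continuousOn _)
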